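/- Let c ∈ ℝ^m with c_j > 0 for all j, let β > 0, and let x ∈ ℝ^m_{≥0} satisfy ⟨c, x⟩ = β. Let a ∈ [0,1]^m be a row with a_j > 0 for at least one j, let Δ ∈ (0, 1], and set κ := Δ·min{c_j/a_j : a_j > 0}. Suppose ⟨a, x⟩ < Δ. Define x' by x'_j := x_j·exp(κ·a_j/c_j)/Z, where Z := (1/β)·Σ_j c_j·x_j·exp(κ·a_j/c_j). Then for every x* ∈ ℝ^m_{≥0} with ⟨c, x*⟩ ≤ β, ⟨a, x*⟩ ≥ 1, and x*_j = 0 whenever x_j = 0, it holds that KL_c(x* ‖ x') − KL_c(x* ‖ x) ≤ (e−1)·κ·⟨a, x⟩ − κ. -/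

import Mathlib

open Finset Real

/-- Weighted KL divergence `KL_c(x ‖ y) = ∑ⱼ cⱼ·(xⱼ·log(xⱼ/yⱼ) − xⱼ + yⱼ)`. -/
noncomputable def wKL {m : ℕ} (c x y : Fin m → ℝ) : ℝ :=
  ∑ j, c j * (x j * Real.log (x j / y j) - x j + y j)

/-- The chord bound `exp u ≤ 1 + (e - 1) u` on the unit interval. -/
lemma exp_sub_one_le_chord {u : ℝ} (h0 : 0 ≤ u) (h1 : u ≤ 1) :
    Real.exp u - 1 ≤ (Real.exp 1 - 1) * u := by
  have h := convexOn_exp.2 (Set.mem_univ 0) (Set.mem_univ 1) (sub_nonneg.2 h1) h0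
    (sub_add_cancel 1 u)
  simp only [smul_eq_mul, mul_zero, mul_one, zero_add, Real.exp_zero] at h
  linarith

/-- Change of a single term of the KL divergence when `y` is replaced by `y * exp u / Z`. -/
lemma mul_log_div_mul_exp_div {s y u Z : ℝ} (hZ : 0 < Z) (hsupp : y = 0 → s = 0) :
    s * Real.log (s / (y * Real.exp u / Z)) = s * Real.log (s / y) + s * (Real.log Z - u) := by
  by_cases hs : s = 0
  · simp [hs]
  have hy : y ≠ 0 := mt hsupp hs
  have hq : s / (y * Real.exp u / Z) = s / y * (Z / Real.exp u) := by
    field_simp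
  rw [hq, Real.log_mul (div_ne_zero hs hy) (div_ne_zero hZ.ne' (Real.exp_ne_zero u)),
    Real.log_div hZ.ne' (Real.exp_ne_zero u), Real.log_exp]
  ring

/-- Change in KL under the multiplicative-weights update of `LearnOrCoverCIP` upon
arrival of a constraint row `a` with deficit `Δ` and `⟨a,x⟩ < Δ`, where
`κ = Δ·min{cⱼ/aⱼ : aⱼ > 0}`: `KL_c(x* ‖ x') − KL_c(x* ‖ x) ≤ (e−1)·κ·⟨a,x⟩ − κ`. -/
theorem stmt_8 (m : ℕ) (c : Fin m → ℝ) (hc : ∀ j, 0 < c j) (β : ℝ) (hβ : 0 < β)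
    (x : Fin m → ℝ) (hx_nonneg : ∀ j, 0 ≤ x j) (hx_cost : ∑ j, c j * x j = β)
    (a : Fin m → ℝ) (ha : ∀ j, a j ∈ Set.Icc (0 : ℝ) 1) (ha_pos : ∃ j, 0 < a j)
    (Δ : ℝ) (hΔ : Δ ∈ Set.Ioc (0 : ℝ) 1)
    (κ0 : ℝ) (hκ0 : IsLeast {r : ℝ | ∃ j, 0 < a j ∧ c j / a j = r} κ0)
    (κ : ℝ) (hκ : κ = Δ * κ0)
    (hax : ∑ j, a j * x j < Δ)
    (Z : ℝ) (hZ : Z = (1 / β) * ∑ j, c j * x j * Real.exp (κ * a j / c j))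
    (x' : Fin m → ℝ) (hx' : ∀ j, x' j = x j * Real.exp (κ * a j / c j) / Z)
    (xstar : Fin m → ℝ) (hxstar_nonneg : ∀ j, 0 ≤ xstar j)
    (hxstar_cost : ∑ j, c j * xstar j ≤ β)
    (hxstar_cover : 1 ≤ ∑ j, a j * xstar j)
    (hxstar_supp : ∀ j, x j = 0 → xstar j = 0) :
    wKL c xstar x' - wKL c xstar x ≤ (Real.exp 1 - 1) * κ * (∑ j, a j * x j) - κ := by
  have hκ0_pos : 0 < κ0 := by
    obtain ⟨j, hj, rfl⟩ := hκ0.1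
    exact div_pos (hc j) hj
  have hκ_pos : 0 < κ := hκ ▸ mul_pos hΔ.1 hκ0_pos
  have hu_nonneg : ∀ j, 0 ≤ κ * a j / c j := fun j =>
    div_nonneg (mul_nonneg hκ_pos.le (ha j).1) (hc j).le
  have hu_le : ∀ j, κ * a j / c j ≤ 1 := by
    intro j
    rw [div_le_one (hc j)]
    rcases (ha j).1.eq_or_lt with h | h
    · rw [← h, mul_zero]
      exact (hc j).le
    · have hκ_le : κ ≤ κ0 := hκ ▸ mul_le_of_le_one_left hκ0_pos.le hΔ.2
      exact (le_div_iff₀ h).1 (hκ_le.trans (hκ0.2 ⟨j, h, rfl⟩))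
  have hβZ : β * Z = ∑ j, c j * x j * Real.exp (κ * a j / c j) := by
    rw [hZ]
    field_simp
  have hZ_one : 1 ≤ Z := by
    refine le_of_mul_le_mul_left ?_ hβ
    rw [mul_one, hβZ, ← hx_cost]
    exact Finset.sum_le_sum fun j _ => le_mul_of_one_le_right
      (mul_nonneg (hc j).le (hx_nonneg j)) (Real.one_le_exp (hu_nonneg j))
  have hZ_pos : 0 < Z := zero_lt_one.trans_le hZ_one
  have hx'_cost : ∑ j, c j * x' j = β := by
    have h : ∀ j, c j * x' j = c j * x j * Real.exp (κ * a j / c j) / Z := fun j => by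
      rw [hx' j]
      ring
    simp only [h]
    rw [← Finset.sum_div, ← hβZ, mul_div_cancel_right₀ _ hZ_pos.ne']
  have hdiff : wKL c xstar x' - wKL c xstar x =
      Real.log Z * (∑ j, c j * xstar j) - κ * ∑ j, a j * xstar j := by
    have h : ∀ j, c j * (xstar j * Real.log (xstar j / x' j) - xstar j + x' j) -
        c j * (xstar j * Real.log (xstar j / x j) - xstar j + x j) =
        Real.log Z * (c j * xstar j) - κ * (a j * xstar j) + c j * x' j - c j * x j := by
      intro j
      have hcj := (hc j).ne'
      have hlog := mul_log_div_mul_exp_div (u := κ * a j / c j) hZ_pos (hxstar_supp j)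
      rw [← hx' j] at hlog
      rw [hlog]
      field_simp
      ring
    unfold wKL
    rw [← Finset.sum_sub_distrib, Finset.sum_congr rfl fun j _ => h j, Finset.sum_sub_distrib,
      Finset.sum_add_distrib, Finset.sum_sub_distrib, ← Finset.mul_sum, ← Finset.mul_sum,
      hx'_cost, hx_cost, add_sub_cancel_right]
  have hchord : β * (Z - 1) ≤ (Real.exp 1 - 1) * κ * ∑ j, a j * x j := by
    rw [mul_sub, mul_one, hβZ, ← hx_cost, ← Finset.sum_sub_distrib, Finset.mul_sum]
    refine Finset.sum_le_sum fun j _ => ?_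
    have hcj := (hc j).ne'
    calc c j * x j * Real.exp (κ * a j / c j) - c j * x j
        = c j * x j * (Real.exp (κ * a j / c j) - 1) := by ring
      _ ≤ c j * x j * ((Real.exp 1 - 1) * (κ * a j / c j)) :=
          mul_le_mul_of_nonneg_left (exp_sub_one_le_chord (hu_nonneg j) (hu_le j))
            (mul_nonneg (hc j).le (hx_nonneg j))
      _ = (Real.exp 1 - 1) * κ * (a j * x j) := by field_simp
  rw [hdiff]
  refine sub_le_sub ?_ (le_mul_of_one_le_right hκ_pos.le hxstar_cover)
  calc Real.log Z * ∑ j, c j * xstar j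
      ≤ Real.log Z * β := mul_le_mul_of_nonneg_left hxstar_cost (Real.log_nonneg hZ_one)
    _ ≤ (Z - 1) * β := mul_le_mul_of_nonneg_right (Real.log_le_sub_one_of_pos hZ_pos) hβ.le
    _ = β * (Z - 1) := mul_comm _ _
    _ ≤ _ := hchord
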